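/- arXiv:2403.13700 — 11 statements merged into one kernel-verified Lean document; each statement's English description precedes it below -/
import Mathlib

section
/- Let M : ℕ, let p > 0 be a real number, and let i : Fin (M+1). Let g : (Fin (M+1) → ℝ) → ℝ be the composition of stl_and_lt0 with the map sending a vector to the list of its coordinates. Then the function h ↦ h⁻¹ * (g ((fun _ => p) + h • Pi.single i 1) - g (fun _ => p)) tends to 1/(M+1) as h tends to 0 from the left (along the filter 𝓝[<] 0). -/
open Filter Topology Real

/-- Minimum of a list of reals (`0` for the empty list). -/
noncomputable def listMin (a : List ℝ) : ℝ := a.min?.getD 0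

/-- Maximum of a list of reals (`0` for the empty list). -/
noncomputable def listMax (a : List ℝ) : ℝ := a.max?.getD 0

/-- STL conjunction, case `a_min < 0`. -/
noncomputable def stl_and_lt0 (ν : ℝ) (a : List ℝ) : ℝ :=
  (a.map fun x => listMin a * exp ((x - listMin a) / listMin a)
      * exp (ν * ((x - listMin a) / listMin a))).sum /
  (a.map fun x => exp (ν * ((x - listMin a) / listMin a))).sum

/-- STL conjunction, case `a_min > 0`. -/
noncomputable def stl_and_gt0 (ν : ℝ) (a : List ℝ) : ℝ :=
  (a.map fun x => x * exp (-(ν * ((x - listMin a) / listMin a)))).sum /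
  (a.map fun x => exp (-(ν * ((x - listMin a) / listMin a)))).sum

/-- The STL conjunction `and_S`. -/
noncomputable def and_S (ν : ℝ) (a : List ℝ) : ℝ :=
  if listMin a < 0 then stl_and_lt0 ν a
  else if 0 < listMin a then stl_and_gt0 ν a
  else 0

/-- The STL disjunction `or_S`. -/
noncomputable def or_S (ν : ℝ) (a : List ℝ) : ℝ :=
  if 0 < listMax a then
    (a.map fun x => listMax a * exp ((x - listMax a) / listMax a)
        * exp (ν * ((x - listMax a) / listMax a))).sum /
    (a.map fun x => exp (ν * ((x - listMax a) / listMax a))).sum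
  else if listMax a < 0 then
    (a.map fun x => x * exp (-(ν * ((x - listMax a) / listMax a)))).sum /
    (a.map fun x => exp (-(ν * ((x - listMax a) / listMax a)))).sum
  else 0

lemma listMin_aux (M : ℕ) (p h : ℝ) (hh : h ≤ 0) (i : Fin (M + 1)) :
    listMin (List.ofFn ((fun _ => p) + h • (Pi.single i 1 : Fin (M + 1) → ℝ))) = p + h := by
  have : (List.ofFn ((fun _ => p) + h • (Pi.single i 1 : Fin (M + 1) → ℝ))).min? = some (p + h) := by
    rw [List.min?_eq_some_iff]
    constructor
    · rw [List.mem_ofFn]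
      exact ⟨i, by simp⟩
    · intro b hb
      rw [List.mem_ofFn] at hb
      obtain ⟨j, rfl⟩ := hb
      by_cases hj : j = i
      · subst hj; simp
      · simp [Pi.single_eq_of_ne hj, hh]
  rw [listMin, this]; rfl

lemma sum_aux (M : ℕ) (p h : ℝ) (i : Fin (M + 1)) (F : ℝ → ℝ) :
    ((List.ofFn ((fun _ => p) + h • (Pi.single i 1 : Fin (M + 1) → ℝ))).map F).sum
      = F (p + h) + M * F p := by
  rw [List.map_ofFn, List.sum_ofFn, Fin.sum_univ_succAbove _ i]
  simp

lemma stl_aux (ν : ℝ) (M : ℕ) (p h : ℝ) (hh : h ≤ 0) (i : Fin (M + 1)) :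
    stl_and_lt0 ν (List.ofFn ((fun _ => p) + h • (Pi.single i 1 : Fin (M + 1) → ℝ)))
      = ((p + h) + M * ((p + h) * exp (-h / (p + h)) * exp (ν * (-h / (p + h))))) /
        (1 + M * exp (ν * (-h / (p + h)))) := by
  rw [stl_and_lt0, listMin_aux M p h hh i, sum_aux, sum_aux]
  have : p - (p + h) = -h := by ring
  simp [this]

theorem shadowlifting_stl_and_lt0_cvg_at_left (ν : ℝ) (hν : 0 < ν) (M : ℕ)
    (p : ℝ) (hp : 0 < p) (i : Fin (M + 1)) :
    Filter.Tendsto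
      (fun h : ℝ =>
        h⁻¹ * ((stl_and_lt0 ν ∘ fun v : Fin (M + 1) → ℝ => List.ofFn v)
                 ((fun _ => p) + h • (Pi.single i 1 : Fin (M + 1) → ℝ)) -
               (stl_and_lt0 ν ∘ fun v : Fin (M + 1) → ℝ => List.ofFn v) (fun _ => p)))
      (𝓝[<] (0 : ℝ)) (𝓝 (1 / (M + 1))) := by
  set f : ℝ → ℝ := fun h =>
    ((p + h) + M * ((p + h) * exp (-h / (p + h)) * exp (ν * (-h / (p + h))))) /
        (1 + M * exp (ν * (-h / (p + h)))) with hf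
  have hM : (0 : ℝ) < 1 + M := by positivity
  have hd : HasDerivAt f (1 / (M + 1)) 0 := by
    have h1 : HasDerivAt (fun h : ℝ => p + h) 1 0 := (hasDerivAt_id (0 : ℝ)).const_add p
    have ht : HasDerivAt (fun h : ℝ => -h / (p + h)) (-1 / p) 0 := by
      have := (hasDerivAt_id (0 : ℝ)).neg.div h1 (by simpa using hp.ne')
      refine HasDerivAt.congr_deriv this ?_
      simp
      field_simp
    have he := ht.exp
    have hv := (ht.const_mul ν).exp
    have hN := h1.add (((h1.mul he).mul hv).const_mul (M : ℝ))
    have hD := (hv.const_mul (M : ℝ)).const_add 1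
    have := hN.div hD (by simpa using hM.ne')
    refine HasDerivAt.congr_deriv this ?_
    simp
    field_simp
    ring
  have h0 := stl_aux ν M p 0 le_rfl i
  have ht := hd.tendsto_slope_zero_left
  refine ht.congr' ?_
  have hmem : Set.Ioo (-p) 0 ∈ 𝓝[<] (0 : ℝ) := Ioo_mem_nhdsLT (by linarith)
  filter_upwards [hmem] with h hh
  have h1 := stl_aux ν M p h hh.2.le i
  simp only [zero_smul, add_zero] at h0
  simp only [Function.comp, h1, h0, hf, smul_eq_mul, zero_add, add_zero]
end

section
/- Let M : ℕ, let p > 0 be a real number, and let i : Fin (M+1). Let g : (Fin (M+1) → ℝ) → ℝ be the composition of stl_and_lt0 with the map sending a vector to the list of its coordinates. Then the function h ↦ h⁻¹ * (g ((fun _ => p) + h • Pi.single i 1) - g (fun _ => p)) tends to 1/(M+1) as h tends to 0 from the right (along the filter 𝓝[>] 0). -/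
open Filter Topology Real

lemma listMin_ofFn {n : ℕ} (v : Fin n → ℝ) (m : ℝ) (h1 : ∃ j, v j = m) (h2 : ∀ j, m ≤ v j) :
    listMin (List.ofFn v) = m := by
  have : (List.ofFn v).min? = some m := by
    rw [List.min?_eq_some_iff]
    refine ⟨by simpa [List.mem_ofFn] using h1, ?_⟩
    intro b hb
    obtain ⟨j, rfl⟩ := (List.mem_ofFn' v b).1 hb
    exact h2 j
  simp [listMin, this]

lemma stl_val (ν : ℝ) (M : ℕ) (v : Fin (M + 1) → ℝ) (i : Fin (M + 1)) (m p q : ℝ)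
    (h1 : ∃ j, v j = m) (h2 : ∀ j, m ≤ v j) (hi : v i = q)
    (hj : ∀ j, v (i.succAbove j) = p) :
    stl_and_lt0 ν (List.ofFn v) =
     (m * exp ((q - m) / m) * exp (ν * ((q - m) / m))
        + M * (m * exp ((p - m) / m) * exp (ν * ((p - m) / m)))) /
     (exp (ν * ((q - m) / m)) + M * exp (ν * ((p - m) / m))) := by
  unfold stl_and_lt0
  rw [listMin_ofFn v m h1 h2, List.map_ofFn, List.map_ofFn, List.sum_ofFn, List.sum_ofFn,
    Fin.sum_univ_succAbove _ i, Fin.sum_univ_succAbove _ i]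
  simp [hi, hj]

theorem shadowlifting_stl_and_lt0_cvg_at_right (ν : ℝ) (hν : 0 < ν) (M : ℕ)
    (p : ℝ) (hp : 0 < p) (i : Fin (M + 1)) :
    Filter.Tendsto
      (fun h : ℝ =>
        h⁻¹ * ((stl_and_lt0 ν ∘ fun v : Fin (M + 1) → ℝ => List.ofFn v)
                 ((fun _ => p) + h • (Pi.single i 1 : Fin (M + 1) → ℝ)) -
               (stl_and_lt0 ν ∘ fun v : Fin (M + 1) → ℝ => List.ofFn v) (fun _ => p)))
      (𝓝[>] (0 : ℝ)) (𝓝 (1 / (M + 1))) := by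
  have hM : (M : ℝ) + 1 ≠ 0 := by positivity
  have hp' := hp.ne'
  have h0 : stl_and_lt0 ν (List.ofFn (fun _ : Fin (M + 1) => p)) = p := by
    rw [stl_val ν M _ i p p p ⟨i, rfl⟩ (fun _ => le_rfl) rfl (fun _ => rfl)]
    have : (1 : ℝ) + M ≠ 0 := by positivity
    simp
    field_simp
  simp only [Function.comp_apply, h0]
  rcases Nat.eq_zero_or_pos M with rfl | hMpos
  · refine tendsto_const_nhds.congr' ?_
    filter_upwards [self_mem_nhdsWithin] with h hh
    have hh : 0 < h := hh
    rw [stl_val ν 0 _ i (p + h) p (p + h) ⟨i, by simp⟩ (fun j => by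
      have : j = i := Subsingleton.elim (α := Fin 1) _ _
      simp [this]) (by simp) (fun j => j.elim0)]
    have := hh.ne'
    simp
    field_simp
  · let F : ℝ → ℝ := fun h => (p * exp (h / p) * exp (ν * (h / p)) + M * p) /
      (exp (ν * (h / p)) + M)
    have hF : HasDerivAt F (1 / (M + 1)) 0 := by
      have e1 : HasDerivAt (fun h : ℝ => exp (h / p)) (exp (0 / p) * (1 / p)) 0 :=
        ((hasDerivAt_id (0:ℝ)).div_const p).exp
      have e2 : HasDerivAt (fun h : ℝ => exp (ν * (h / p))) (exp (ν * (0 / p)) * (ν * (1 / p))) 0 :=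
        (((hasDerivAt_id (0:ℝ)).div_const p).const_mul ν).exp
      have hd : exp (ν * (0 / p)) + (M : ℝ) ≠ 0 := by positivity
      have := (((e1.const_mul p).mul e2).add_const (M * p)).div (e2.add_const (M : ℝ)) hd
      refine this.congr_deriv ?_
      have h3 : (1 : ℝ) + M ≠ 0 := by positivity
      simp
      field_simp
      ring
    have hF0 : F 0 = p := by
      have h3 : (1 : ℝ) + M ≠ 0 := by positivity
      simp [F]
      field_simp
    have ht := hF.tendsto_slope_zero_right
    refine ht.congr' ?_
    filter_upwards [self_mem_nhdsWithin] with h hh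
    have hh : 0 < h := hh
    obtain ⟨k, rfl⟩ : ∃ k, M = k + 1 := ⟨M - 1, by omega⟩
    rw [stl_val ν (k + 1) _ i p p (p + h) ⟨i.succAbove 0, by simp⟩ (fun j => by
      by_cases hji : j = i
      · subst hji; simp [hh.le]
      · simp [hji]) (by simp) (fun j => by simp)]
    rw [zero_add, hF0]
    simp [F]
end

section
/- Let M : ℕ and let g : (Fin (M+1) → ℝ) → ℝ be the composition of stl_and_gt0 with the map sending a vector to the list of its coordinates. Then for every real p > 0 and every index i : Fin (M+1), the i-th partial derivative of g at the constant vector with value p exists and equals 1/(M+1). -/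
open Filter Topology Real

/-- The `i`-th partial derivative of `f` at `a` exists and equals `L`. -/
def HasPartialDeriv {n : ℕ} (f : (Fin n → ℝ) → ℝ) (a : Fin n → ℝ) (i : Fin n) (L : ℝ) : Prop :=
  Filter.Tendsto (fun h : ℝ => h⁻¹ * (f (a + h • (Pi.single i 1 : Fin n → ℝ)) - f a))
    (𝓝[≠] (0 : ℝ)) (𝓝 L)

theorem listMin_ofFn_mem {M : ℕ} (v : Fin (M + 1) → ℝ) : ∃ j, listMin (List.ofFn v) = v j := by
  have hne : List.ofFn v ≠ [] := by simp
  obtain ⟨m, hm⟩ : ∃ m, (List.ofFn v).min? = some m := by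
    cases h : (List.ofFn v).min? with
    | none => exact absurd (List.min?_eq_none_iff.1 h) hne
    | some m => exact ⟨m, rfl⟩
  have hmem : m ∈ List.ofFn v := List.min?_mem hm
  obtain ⟨j, hj⟩ := (List.mem_ofFn' _ _).1 hmem
  exact ⟨j, by rw [listMin, hm, hj]; rfl⟩

theorem stl_sub (ν p : ℝ) {M : ℕ} (v : Fin (M + 1) → ℝ) (m : ℝ) (hm : listMin (List.ofFn v) = m) :
    stl_and_gt0 ν (List.ofFn v) - p =
      (∑ j, (v j - p) * exp (-(ν * ((v j - m) / m)))) / ∑ j, exp (-(ν * ((v j - m) / m))) := by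
  have hpos : 0 < ∑ j, exp (-(ν * ((v j - m) / m))) :=
    Finset.sum_pos (fun _ _ => exp_pos _) Finset.univ_nonempty
  unfold stl_and_gt0
  rw [hm]
  simp only [List.map_ofFn, List.sum_ofFn, Function.comp_def, sub_mul, Finset.sum_sub_distrib,
    ← Finset.mul_sum]
  field_simp

theorem shadowlifting_stl_and_gt0 (ν : ℝ) (hν : 0 < ν) (M : ℕ)
    (p : ℝ) (hp : 0 < p) (i : Fin (M + 1)) :
    HasPartialDeriv (stl_and_gt0 ν ∘ fun v : Fin (M + 1) → ℝ => List.ofFn v)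
      (fun _ => p) i (1 / (M + 1)) := by
  unfold HasPartialDeriv
  set V : ℝ → Fin (M + 1) → ℝ := fun h => (fun _ => p) + h • (Pi.single i 1 : Fin (M + 1) → ℝ)
    with hV
  have hVj : ∀ h j, V h j - p = h * (Pi.single i 1 : Fin (M + 1) → ℝ) j := by
    intro h j; simp [hV]
  set m : ℝ → ℝ := fun h => listMin (List.ofFn (V h)) with hmdef
  have hVlim : ∀ j, Tendsto (fun h => V h j) (𝓝 0) (𝓝 p) := by
    intro j
    have : Continuous fun h => V h j := by simp only [hV]; fun_prop
    simpa [hV] using this.tendsto 0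
  have hmlim : Tendsto m (𝓝 0) (𝓝 p) := by
    rw [tendsto_iff_norm_sub_tendsto_zero]
    refine squeeze_zero (fun _ => norm_nonneg _) (g := fun h : ℝ => |h|) ?_ ?_
    · intro h
      obtain ⟨j, hj⟩ := listMin_ofFn_mem (V h)
      simp only [hmdef]
      rw [hj, hVj, Real.norm_eq_abs, abs_mul]
      by_cases hji : j = i
      · subst hji; simp
      · simp [Pi.single_apply, hji]
    · simpa using (continuous_abs (G := ℝ)).tendsto 0
  have hw : ∀ j, Tendsto (fun h => exp (-(ν * ((V h j - m h) / m h)))) (𝓝 0) (𝓝 1) := by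
    intro j
    have h1 := ((((hVlim j).sub hmlim).div hmlim hp.ne').const_mul ν).neg
    have h2 := (Real.continuous_exp.tendsto _).comp h1
    simpa [Function.comp_def] using h2
  have hS : Tendsto (fun h => ∑ j, exp (-(ν * ((V h j - m h) / m h)))) (𝓝 0) (𝓝 (M + 1)) := by
    simpa using tendsto_finsetSum Finset.univ (fun j _ => hw j)
  have hq := ((hw i).div hS (by positivity)).mono_left (nhdsWithin_le_nhds (s := {0}ᶜ))
  refine hq.congr' ?_
  filter_upwards [self_mem_nhdsWithin] with h hh
  have hh : h ≠ 0 := hh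
  have hconst : stl_and_gt0 ν (List.ofFn (fun _ : Fin (M + 1) => p)) = p := by
    have := stl_sub ν p (fun _ : Fin (M + 1) => p) _ rfl
    simp only [sub_self, zero_mul, Finset.sum_const_zero, zero_div] at this
    linarith
  simp only [Function.comp_def, Pi.div_apply]
  rw [hconst, stl_sub ν p (V h) (m h) rfl]
  have hnum : ∑ j, (V h j - p) * exp (-(ν * ((V h j - m h) / m h)))
      = h * exp (-(ν * ((V h i - m h) / m h))) := by
    rw [Finset.sum_eq_single i]
    · rw [hVj]; simp
    · intro j _ hj; rw [hVj]; simp [hj]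
    · simp
  rw [hnum, mul_div_assoc, inv_mul_cancel_left₀ hh]
end

section
/- Let M : ℕ and let f : (Fin (M+1) → ℝ) → ℝ be the composition of the STL conjunction and_S with the map sending a vector to the list of its coordinates. Then f satisfies the shadow-lifting property: for every real p > 0 and every index i : Fin (M+1), the i-th partial derivative of f at the constant vector with value p exists and is positive. -/
open Filter Topology Real

/-- `f` satisfies shadow-lifting: at every positive constant vector, all partial
derivatives exist and are positive. -/
def ShadowLifting {n : ℕ} (f : (Fin n → ℝ) → ℝ) : Prop :=
  ∀ p : ℝ, 0 < p → ∀ i : Fin n, ∃ L : ℝ, 0 < L ∧ HasPartialDeriv f (fun _ => p) i L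


lemma listMin_mem_aux (n : ℕ) (v : Fin (n + 1) → ℝ) :
    ∃ j, listMin (List.ofFn v) = v j := by
  have h : ∃ m, (List.ofFn v).min? = some m := by
    rcases hm : (List.ofFn v).min? with _ | m
    · rw [List.min?_eq_none_iff] at hm
      simp at hm
    · exact ⟨m, rfl⟩
  obtain ⟨m, hm⟩ := h
  have h2 : m ∈ List.ofFn v := List.min?_mem hm
  rw [List.mem_ofFn] at h2
  obtain ⟨j, hj⟩ := h2
  exact ⟨j, by rw [listMin, hm, hj]; rfl⟩

theorem shadow_lifting_stl_and (ν : ℝ) (hν : 0 < ν) (M : ℕ) :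
    ShadowLifting (and_S ν ∘ fun v : Fin (M + 1) → ℝ => List.ofFn v) := by
  intro p hp i
  refine ⟨1 / (M + 1), by positivity, ?_⟩
  unfold HasPartialDeriv
  set V : ℝ → Fin (M + 1) → ℝ := fun h => (fun _ => p) + h • (Pi.single i 1 : Fin (M+1) → ℝ) with hV
  set m : ℝ → ℝ := fun h => listMin (List.ofFn (V h)) with hm
  set w : Fin (M + 1) → ℝ → ℝ := fun j h => exp (-(ν * ((V h j - m h) / m h))) with hw
  have hVj : ∀ h j, V h j = p + h * (if j = i then 1 else 0) := by
    intro h j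
    simp [hV, Pi.single_apply]
  have hmb : ∀ h, |m h - p| ≤ |h| := by
    intro h
    obtain ⟨j, hj⟩ := listMin_mem_aux M (V h)
    have : m h = V h j := hj
    rw [this, hVj]
    split_ifs <;> simp
  have hS : ∀ h, 0 < ∑ j, w j h := fun h =>
    Finset.sum_pos (fun j _ => exp_pos _) Finset.univ_nonempty
  have key : ∀ h, |h| < p → and_S ν (List.ofFn (V h)) = p + h * (w i h / ∑ j, w j h) := by
    intro h hh
    have h1 : 0 < m h := by
      have := (abs_le.mp (hmb h)).1
      linarith
    have h2 : and_S ν (List.ofFn (V h)) = (∑ j, V h j * w j h) / ∑ j, w j h := by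
      have h3 : ¬ listMin (List.ofFn (V h)) < 0 := not_lt.mpr h1.le
      have h4 : 0 < listMin (List.ofFn (V h)) := h1
      rw [and_S, if_neg h3, if_pos h4, stl_and_gt0]
      simp only [List.map_ofFn, List.sum_ofFn]
      rfl
    have h5 : ∑ j, V h j * w j h = p * (∑ j, w j h) + h * w i h := by
      simp only [hVj, add_mul, Finset.sum_add_distrib, ← Finset.mul_sum, mul_assoc]
      simp
    rw [h2, h5]
    have := (hS h).ne'
    field_simp
  have hmt : Tendsto m (𝓝 0) (𝓝 p) := by
    rw [tendsto_iff_dist_tendsto_zero]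
    refine squeeze_zero (fun _ => dist_nonneg) (fun h => hmb h) ?_
    have : Tendsto (fun h : ℝ => |h|) (𝓝 0) (𝓝 |0|) := continuous_abs.tendsto 0
    simpa using this
  have hwt : ∀ j, Tendsto (w j) (𝓝 0) (𝓝 1) := by
    intro j
    have hv : Tendsto (fun h => V h j) (𝓝 0) (𝓝 p) := by
      simp only [hVj]
      have : Continuous fun h : ℝ => p + h * (if j = i then 1 else 0) := by fun_prop
      simpa using this.tendsto 0
    have := (continuous_exp.tendsto _).comp
      ((((hv.sub hmt).div hmt hp.ne').const_mul ν).neg)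
    simp only [sub_self, zero_div, mul_zero, neg_zero, exp_zero] at this
    exact this
  have hq : Tendsto (fun h => w i h / ∑ j, w j h) (𝓝 0) (𝓝 (1 / (M + 1))) := by
    have h1 := tendsto_finsetSum (Finset.univ : Finset (Fin (M+1))) (fun j _ => hwt j)
    have h2 := (hwt i).div h1 (by simp; positivity)
    have e : (1:ℝ) / (∑ _j : Fin (M+1), (1:ℝ)) = 1 / (M + 1) := by simp
    rw [e] at h2
    exact h2
  refine (hq.mono_left nhdsWithin_le_nhds).congr' ?_
  have hev : ∀ᶠ h : ℝ in 𝓝[≠] 0, |h| < p := by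
    apply nhdsWithin_le_nhds
    filter_upwards [Metric.ball_mem_nhds (0:ℝ) hp] with h hh
    simpa using hh
  filter_upwards [hev, self_mem_nhdsWithin] with h hh hne
  have h0 := key 0 (by simpa using hp)
  have e0 : V 0 = fun _ => p := by simp [hV]
  rw [e0] at h0
  have hne' : h ≠ 0 := hne
  have e1 := key h hh
  simp only [Function.comp]
  rw [h0]
  change _ = h⁻¹ * (and_S ν (List.ofFn (V h)) - _)
  rw [e1]
  field_simp
  ring
end

section
/- Let p > 0 be a real number and define the Yager conjunction T : ℝ → ℝ → ℝ by T x y = max (1 - ((1-x)^p + (1-y)^p)^(1/p)) 0, where exponentiation is the real power function rpow. Then T is associative on [0,1]: for all a b c ∈ [0,1], T (T a b) c = T a (T b c). -/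
/-- The Yager conjunction with parameter `p` (exponentiation is `Real.rpow`). -/
noncomputable def yager_and (p : ℝ) (x y : ℝ) : ℝ :=
  max (1 - ((1 - x) ^ p + (1 - y) ^ p) ^ (1 / p)) 0

theorem yager_aux1 (p : ℝ) (hp : 0 < p) (S : ℝ) (hS : 0 ≤ S) :
    (1 - max (1 - S ^ (1 / p)) 0) ^ p = min S 1 := by
  rcases le_total S 1 with h | h
  · have h1 : S ^ (1 / p) ≤ 1 := Real.rpow_le_one hS h (by positivity)
    rw [max_eq_left (by linarith), min_eq_left h, sub_sub_cancel, ← Real.rpow_mul hS,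
      one_div_mul_cancel hp.ne', Real.rpow_one]
  · have h1 : 1 ≤ S ^ (1 / p) := Real.one_le_rpow h (by positivity)
    rw [max_eq_right (by linarith), min_eq_right h, sub_zero, Real.one_rpow]

theorem yager_aux2 (p : ℝ) (hp : 0 < p) (u w : ℝ) (hw : 0 ≤ w) :
    max (1 - (min u 1 + w) ^ (1 / p)) 0 = max (1 - (u + w) ^ (1 / p)) 0 := by
  rcases le_total u 1 with h | h
  · rw [min_eq_left h]
  · have h1 : 1 ≤ (1 + w) ^ (1 / p) := Real.one_le_rpow (by linarith) (by positivity)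
    have h2 : 1 ≤ (u + w) ^ (1 / p) := Real.one_le_rpow (by linarith) (by positivity)
    rw [min_eq_right h, max_eq_right (by linarith), max_eq_right (by linarith)]

theorem yager_and_assoc (p : ℝ) (hp : 0 < p) (a b c : ℝ)
    (ha : a ∈ Set.Icc (0 : ℝ) 1) (hb : b ∈ Set.Icc (0 : ℝ) 1) (hc : c ∈ Set.Icc (0 : ℝ) 1) :
    yager_and p (yager_and p a b) c = yager_and p a (yager_and p b c) := by
  have hA : 0 ≤ (1 - a) ^ p := Real.rpow_nonneg (by linarith [ha.2]) p
  have hB : 0 ≤ (1 - b) ^ p := Real.rpow_nonneg (by linarith [hb.2]) p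
  have hC : 0 ≤ (1 - c) ^ p := Real.rpow_nonneg (by linarith [hc.2]) p
  unfold yager_and
  rw [yager_aux1 p hp _ (add_nonneg hA hB), yager_aux1 p hp _ (add_nonneg hB hC),
    yager_aux2 p hp _ _ hC, add_comm ((1 - a) ^ p) (min _ _), yager_aux2 p hp _ _ hA,
    add_assoc, add_comm ((1 - a) ^ p)]
end

section
/- Let p > 0 be a real number and define the Yager disjunction S : ℝ → ℝ → ℝ by S x y = min ((x^p + y^p)^(1/p)) 1, where exponentiation is the real power function rpow. Then S is associative on [0,1]: for all a b c ∈ [0,1], S (S a b) c = S a (S b c). -/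
/-- The Yager disjunction with parameter `p` (exponentiation is `Real.rpow`). -/
noncomputable def yager_or (p : ℝ) (x y : ℝ) : ℝ :=
  min ((x ^ p + y ^ p) ^ (1 / p)) 1

theorem yager_aux (p : ℝ) (hp : 0 < p) (x y : ℝ) (hx : 0 ≤ x) (hy : 0 ≤ y) :
    yager_or p x y = (min (x ^ p + y ^ p) 1) ^ (1 / p) := by
  have h0 : 0 ≤ x ^ p + y ^ p := by positivity
  have hq : 0 < 1 / p := by positivity
  unfold yager_or
  rcases le_total (x ^ p + y ^ p) 1 with h | h
  · rw [min_eq_left h, min_eq_left (Real.rpow_le_one h0 h hq.le)]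
  · rw [min_eq_right h, Real.one_rpow, min_eq_right (Real.one_le_rpow h hq.le)]

theorem yager_aux_pow (p : ℝ) (hp : 0 < p) (x y : ℝ) (hx : 0 ≤ x) (hy : 0 ≤ y) :
    0 ≤ yager_or p x y ∧ (yager_or p x y) ^ p = min (x ^ p + y ^ p) 1 := by
  have h0 : 0 ≤ min (x ^ p + y ^ p) 1 := by positivity
  rw [yager_aux p hp x y hx hy]
  refine ⟨by positivity, ?_⟩
  rw [← Real.rpow_mul h0, one_div_mul_cancel hp.ne', Real.rpow_one]

theorem yager_or_assoc (p : ℝ) (hp : 0 < p) (a b c : ℝ)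
    (ha : a ∈ Set.Icc (0 : ℝ) 1) (hb : b ∈ Set.Icc (0 : ℝ) 1) (hc : c ∈ Set.Icc (0 : ℝ) 1) :
    yager_or p (yager_or p a b) c = yager_or p a (yager_or p b c) := by
  obtain ⟨h1, h2⟩ := yager_aux_pow p hp a b ha.1 hb.1
  obtain ⟨h3, h4⟩ := yager_aux_pow p hp b c hb.1 hc.1
  have hA := Real.rpow_nonneg ha.1 p
  have hC := Real.rpow_nonneg hc.1 p
  rw [yager_aux p hp _ _ h1 hc.1, yager_aux p hp _ _ ha.1 h3, h2, h4]
  congr 1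
  generalize a ^ p = A at *
  generalize b ^ p = B at *
  generalize c ^ p = C at *
  clear h2 h4
  grind
end

section
/- Inversion of STL conjunction (true case): for every nonempty list a of real numbers, if and_S a ≥ 0 then every element x of a satisfies x ≥ 0. -/
open Filter Topology Real

theorem list_sum_pos_aux (f : ℝ → ℝ) (hf : ∀ x, 0 < f x) (a : List ℝ) (ha : a ≠ []) :
    0 < (a.map f).sum := by
  apply List.sum_pos
  · intro y hy
    obtain ⟨x, _, rfl⟩ := List.mem_map.1 hy
    exact hf x
  · simpa using ha

theorem listMin_le_aux (a : List ℝ) (x : ℝ) (hx : x ∈ a) : listMin a ≤ x := by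
  unfold listMin
  cases hm : a.min? with
  | none => simp [List.min?_eq_none_iff] at hm; simp [hm] at hx
  | some m => exact (List.min?_eq_some_iff.1 hm).2 x hx

theorem stl_nary_inversion_andE1 (ν : ℝ) (hν : 0 < ν) (a : List ℝ) (ha : a ≠ [])
    (h : 0 ≤ and_S ν a) : ∀ x ∈ a, 0 ≤ x := by
  intro x hx
  refine le_trans ?_ (listMin_le_aux a x hx)
  by_contra! hneg
  rw [and_S, if_pos hneg, stl_and_lt0] at h
  have h1 := list_sum_pos_aux (fun x => exp (ν * ((x - listMin a) / listMin a)))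
    (fun x => exp_pos _) a ha
  have h2 := list_sum_pos_aux (fun x => exp ((x - listMin a) / listMin a)
      * exp (ν * ((x - listMin a) / listMin a)))
    (fun x => by positivity) a ha
  simp only [mul_assoc, List.sum_map_mul_left] at h
  exact absurd h (not_le.2 (div_neg_of_neg_of_pos (mul_neg_of_neg_of_pos hneg h2) h1))
end

section
/- Inversion of STL conjunction (false case): for every nonempty list a of real numbers, if and_S a < 0 then there exists an element x of a with x < 0. -/
open Filter Topology Real

theorem stl_nary_inversion_andE0 (ν : ℝ) (hν : 0 < ν) (a : List ℝ) (ha : a ≠ [])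
    (h : and_S ν a < 0) : ∃ x ∈ a, x < 0 := by
  by_contra hc
  push Not at hc
  unfold and_S at h
  split_ifs at h with h1 h2
  · unfold listMin at h1
    cases hm : a.min? with
    | none => simp [hm] at h1
    | some m =>
      have hmem : m ∈ a := List.min?_mem hm
      simp [hm] at h1
      exact absurd (hc m hmem) (not_le.mpr h1)
  · unfold stl_and_gt0 at h
    refine absurd h (not_lt.mpr (div_nonneg (List.sum_nonneg ?_) (List.sum_nonneg ?_)))
    · intro y hy
      obtain ⟨x, hx, rfl⟩ := List.mem_map.mp hy
      exact mul_nonneg (hc x hx) (exp_pos _).le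
    · intro y hy
      obtain ⟨x, hx, rfl⟩ := List.mem_map.mp hy
      exact (exp_pos _).le
  · exact lt_irrefl _ h
end

section
/- Inversion of STL disjunction (true case): for every nonempty list a of real numbers, if or_S a ≥ 0 then there exists an element x of a with x ≥ 0. -/
open Filter Topology Real

theorem aux_sum_pos (f : ℝ → ℝ) (l : List ℝ) (hl : l ≠ []) (hf : ∀ x ∈ l, 0 < f x) :
    0 < (l.map f).sum := by
  induction l with
  | nil => exact absurd rfl hl
  | cons b t ih =>
    rw [List.map_cons, List.sum_cons]
    have hb := hf b (by simp)
    by_cases ht : t = []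
    · subst ht; simpa using hb
    · have := ih ht (fun x hx => hf x (by simp [hx]))
      linarith

theorem aux_sum_neg (f : ℝ → ℝ) (l : List ℝ) (hl : l ≠ []) (hf : ∀ x ∈ l, f x < 0) :
    (l.map f).sum < 0 := by
  induction l with
  | nil => exact absurd rfl hl
  | cons b t ih =>
    rw [List.map_cons, List.sum_cons]
    have hb := hf b (by simp)
    by_cases ht : t = []
    · subst ht; simpa using hb
    · have := ih ht (fun x hx => hf x (by simp [hx]))
      linarith

theorem aux_max_mem (a : List ℝ) (ha : a ≠ []) : listMax a ∈ a := by
  unfold listMax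
  cases hm : a.max? with
  | none => exact absurd (List.max?_eq_none_iff.mp hm) ha
  | some m => exact List.max?_mem hm

theorem stl_nary_inversion_orE1 (ν : ℝ) (hν : 0 < ν) (a : List ℝ) (ha : a ≠ [])
    (h : 0 ≤ or_S ν a) : ∃ x ∈ a, 0 ≤ x := by
  by_contra! hc
  have hm : listMax a < 0 := hc _ (aux_max_mem a ha)
  rw [or_S, if_neg hm.not_gt, if_pos hm] at h
  refine absurd h (not_le.mpr (div_neg_of_neg_of_pos ?_ ?_))
  · exact aux_sum_neg _ a ha fun x hx => mul_neg_of_neg_of_pos (hc x hx) (exp_pos _)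
  · exact aux_sum_pos _ a ha fun x hx => exp_pos _
end

section
/- Inversion of STL disjunction (false case): for every nonempty list a of real numbers, if or_S a < 0 then every element x of a satisfies x < 0. -/
open Filter Topology Real

theorem stl_nary_inversion_orE0 (ν : ℝ) (hν : 0 < ν) (a : List ℝ) (ha : a ≠ [])
    (h : or_S ν a < 0) : ∀ x ∈ a, x < 0 := by
  intro x hx
  have hle : x ≤ listMax a := by
    unfold listMax
    cases hm : a.max? with
    | none => exact absurd (List.max?_eq_none_iff.mp hm) ha
    | some m => exact (List.max?_eq_some_iff.mp hm).2 x hx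
  by_contra hx0
  unfold or_S at h
  split_ifs at h with h1 h2
  · refine absurd h (not_lt.mpr (div_nonneg ?_ ?_))
    · apply List.sum_nonneg
      intro y hy
      obtain ⟨z, -, rfl⟩ := List.mem_map.mp hy
      positivity
    · apply List.sum_nonneg
      intro y hy
      obtain ⟨z, -, rfl⟩ := List.mem_map.mp hy
      positivity
  · linarith
  · exact lt_irrefl _ h
end

section
/- Soundness of DL2 on the negation-free fragment: define is_dl2 (b : Bool) (x : ℝ) to hold iff (if b then x = 0 else x < 0). Then for every negation-free LDL expression e of type Bool and every b : Bool, if is_dl2 b (⟦e⟧_DL2) holds then ⟦e⟧_B = b. -/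
open Real

/-! ### The (negation-free) LDL language -/

inductive LdlType where
  | real : LdlType
  | bool : LdlType
  | index : ℕ → LdlType
  | vector : ℕ → LdlType
  | func : ℕ → ℕ → LdlType

/-- Negation-free LDL expressions, intrinsically typed. -/
inductive Expr : LdlType → Type where
  | real : ℝ → Expr .real
  | bool : Bool → Expr .bool
  | idx : {n : ℕ} → Fin n → Expr (.index n)
  | vec : {n : ℕ} → (Fin n → ℝ) → Expr (.vector n)
  | fn : {n m : ℕ} → ((Fin n → ℝ) → (Fin m → ℝ)) → Expr (.func n m)
  | app : {n m : ℕ} → Expr (.func n m) → Expr (.vector n) → Expr (.vector m)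
  | lookup : {n : ℕ} → Expr (.vector n) → Expr (.index n) → Expr .real
  | le : Expr .real → Expr .real → Expr .bool
  | eq : Expr .real → Expr .real → Expr .bool
  | and : List (Expr .bool) → Expr .bool
  | or : List (Expr .bool) → Expr .bool

/-- Semantic domain of types for the boolean interpretation. -/
@[reducible] def BSem : LdlType → Type
  | .real => ℝ
  | .bool => Bool
  | .index n => Fin n
  | .vector n => Fin n → ℝ
  | .func n m => (Fin n → ℝ) → (Fin m → ℝ)

/-- Semantic domain of types for real-valued interpretations. -/
@[reducible] def RSem : LdlType → Type
  | .real => ℝ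
  | .bool => ℝ
  | .index n => Fin n
  | .vector n => Fin n → ℝ
  | .func n m => (Fin n → ℝ) → (Fin m → ℝ)

open Classical in
/-- The boolean interpretation `⟦·⟧_B` of LDL expressions. -/
noncomputable def boolSem : {t : LdlType} → Expr t → BSem t
  | _, .real r => r
  | _, .bool b => b
  | _, .idx i => i
  | _, .vec v => v
  | _, .fn f => f
  | _, .app f v => boolSem f (boolSem v)
  | _, .lookup v i => boolSem v (boolSem i)
  | _, .le e₁ e₂ => decide (boolSem e₁ ≤ boolSem e₂)
  | _, .eq e₁ e₂ => decide (boolSem e₁ = boolSem e₂)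
  | _, .and l => (l.attach.map fun x => boolSem x.1).all id
  | _, .or l => (l.attach.map fun x => boolSem x.1).any id
termination_by t e => sizeOf e
decreasing_by
  all_goals simp_wf
  all_goals first
    | omega
    | (have := List.sizeOf_lt_of_mem x.2; omega)

/-! ### The DL2 interpretation -/

/-- The DL2 interpretation `⟦·⟧_DL2` of LDL expressions. -/
noncomputable def dl2Sem : {t : LdlType} → Expr t → RSem t
  | _, .real r => r
  | _, .bool b => if b then 0 else -1
  | _, .idx i => i
  | _, .vec v => v
  | _, .fn f => f
  | _, .app f v => dl2Sem f (dl2Sem v)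
  | _, .lookup v i => dl2Sem v (dl2Sem i)
  | _, .le e₁ e₂ => -max (dl2Sem e₁ - dl2Sem e₂) 0
  | _, .eq e₁ e₂ => -|dl2Sem e₂ - dl2Sem e₁|
  | _, .and l => (l.attach.map fun x => dl2Sem x.1).sum
  | _, .or l => (-1 : ℝ) ^ (l.length + 1) * (l.attach.map fun x => dl2Sem x.1).prod
termination_by t e => sizeOf e
decreasing_by
  all_goals simp_wf
  all_goals first
    | omega
    | (have := List.sizeOf_lt_of_mem x.2; omega)

/-- `x` represents the boolean `b` in DL2. -/
def is_dl2 (b : Bool) (x : ℝ) : Prop := if b then x = 0 else x < 0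

def RelSem : (t : LdlType) → BSem t → RSem t → Prop
  | .real, x, y => x = y
  | .bool, b, x => is_dl2 b x
  | .index _, x, y => x = y
  | .vector _, x, y => x = y
  | .func _ _, x, y => x = y

theorem and_aux {α : Type} (f : α → Bool) (g : α → ℝ) (l : List α)
    (h : ∀ x ∈ l, is_dl2 (f x) (g x)) : is_dl2 ((l.map f).all id) ((l.map g).sum) := by
  induction l with
  | nil => simp [is_dl2]
  | cons a l ih =>
    have h1 := h a (by simp)
    have h2 := ih (fun x hx => h x (by simp [hx]))
    rw [List.map_cons, List.map_cons, List.all_cons, List.sum_cons, id]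
    generalize (l.map f).all id = c at *
    generalize (l.map g).sum = s at *
    generalize f a = d at *
    cases c <;> cases d <;> simp [is_dl2] at * <;> linarith

theorem or_aux {α : Type} (f : α → Bool) (g : α → ℝ) (l : List α)
    (h : ∀ x ∈ l, is_dl2 (f x) (g x)) :
    is_dl2 ((l.map f).any id) ((-1 : ℝ) ^ (l.length + 1) * (l.map g).prod) := by
  induction l with
  | nil => simp [is_dl2]
  | cons a l ih =>
    have h1 := h a (by simp)
    have h2 := ih (fun x hx => h x (by simp [hx]))
    have e : (-1 : ℝ) ^ ((a :: l).length + 1) * ((a :: l).map g).prod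
        = -(g a * ((-1 : ℝ) ^ (l.length + 1) * (l.map g).prod)) := by
      rw [List.map_cons, List.prod_cons, List.length_cons, pow_succ]; ring
    rw [e, List.map_cons, List.any_cons, id]
    generalize (l.map f).any id = c at *
    generalize (-1 : ℝ) ^ (l.length + 1) * (l.map g).prod = s at *
    generalize f a = d at *
    cases c <;> cases d <;> simp only [is_dl2, if_true, Bool.false_eq_true, if_false,
      Bool.or_false, Bool.or_true] at *
    · nlinarith [mul_pos_of_neg_of_neg h1 h2]
    · simp [h1]
    · simp [h2]
    · simp [h1]

theorem rel_sem : {t : LdlType} → (e : Expr t) → RelSem t (boolSem e) (dl2Sem e)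
  | _, .real r => by simp [RelSem, boolSem, dl2Sem]
  | _, .bool b => by cases b <;> simp [RelSem, boolSem, dl2Sem, is_dl2]
  | _, .idx i => by simp [RelSem, boolSem, dl2Sem]
  | _, .vec v => by simp [RelSem, boolSem, dl2Sem]
  | _, .fn f => by simp [RelSem, boolSem, dl2Sem]
  | _, .app f v => by
    have h1 := rel_sem f
    have h2 := rel_sem v
    simp only [RelSem, boolSem, dl2Sem] at *
    rw [h1, h2]
  | _, .lookup v i => by
    have h1 := rel_sem v
    have h2 := rel_sem i
    simp only [RelSem, boolSem, dl2Sem] at *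
    rw [h1, h2]
  | _, .le e₁ e₂ => by
    have h1 := rel_sem e₁
    have h2 := rel_sem e₂
    simp only [RelSem, boolSem, dl2Sem] at *
    rw [h1, h2]
    by_cases h : dl2Sem e₁ ≤ dl2Sem e₂
    · simp [is_dl2, h]
    · simp [is_dl2, h]
  | _, .eq e₁ e₂ => by
    have h1 := rel_sem e₁
    have h2 := rel_sem e₂
    simp only [RelSem, boolSem, dl2Sem] at *
    rw [h1, h2]
    by_cases h : dl2Sem e₁ = dl2Sem e₂
    · simp [is_dl2, h]
    · simp [is_dl2, h]
      exact sub_ne_zero.mpr (Ne.symm h)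
  | _, .and l => by
    have h := and_aux (fun x : {x // x ∈ l} => boolSem x.1) (fun x => dl2Sem x.1) l.attach
      (fun x _ => rel_sem x.1)
    simp only [RelSem, boolSem, dl2Sem]
    exact h
  | _, .or l => by
    have h := or_aux (fun x : {x // x ∈ l} => boolSem x.1) (fun x => dl2Sem x.1) l.attach
      (fun x _ => rel_sem x.1)
    rw [List.length_attach] at h
    simp only [RelSem, boolSem, dl2Sem]
    exact h
termination_by t e => sizeOf e
decreasing_by
  all_goals simp_wf
  all_goals first
    | omega
    | (have := List.sizeOf_lt_of_mem x.2; omega)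

/-- Soundness of DL2 on the negation-free fragment of LDL. -/
theorem dl2_soundness (e : Expr .bool) (b : Bool)
    (h : is_dl2 b (dl2Sem e)) : boolSem e = b := by
  have h' : is_dl2 (boolSem e) (dl2Sem e) := rel_sem e
  generalize boolSem e = c at *
  generalize dl2Sem e = s at *
  cases c <;> cases b <;> simp [is_dl2] at * <;> linarith
end
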